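/- Let n, K be positive integers and let D_n^K := {Σ_{k=−nK}^{nK} λ_k δ_{k/n} : λ_k ≥ 0 for all k and Σ_k λ_k = 1}. Let F : D_n^K → ℝ be Lipschitz continuous with respect to W_1 on D_n^K, and assume: F is uniformly Dawson-differentiable on D_n^K, i.e. there is ΔF : D_n^K×ℝ → ℝ with sup_{m ∈ D_n^K, x ∈ [−K,K]} |(F((1−ε)m + ε·δ_x) − F(m))/ε − ΔF(m,x)| → 0 as ε → 0+; ∫_ℝ ΔF(m,x) dm(x) = 0 for all m ∈ D_n^K; x ↦ ΔF(m,x) is C^1 for each m ∈ D_n^K, m ↦ ΔF(m,x) is W_1-continuous on D_n^K for each x, and (m,x) ↦ ∂_x ΔF(m,x) is jointly continuous on D_n^K×ℝ. Then for all m, μ ∈ D_n^K: F(m) − F(μ) = ∫_0^1 ∫_ℝ ΔF((1−t)μ + t·m, x) d(m − μ)(x) dt. -/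

import Mathlib

open MeasureTheory Filter Topology

noncomputable section

/-- `π` is a coupling of the measures `m` and `μ` on `ℝ`. -/
def IsCoupling (π : Measure (ℝ × ℝ)) (m μ : Measure ℝ) : Prop :=
  π.map Prod.fst = m ∧ π.map Prod.snd = μ

/-- The Wasserstein distance of order one between two measures on `ℝ`:
the infimum over couplings `π` of `∫ |x - y| dπ(x,y)`. -/
def W1 (m μ : Measure ℝ) : ℝ :=
  sInf {c : ℝ | ∃ π : Measure (ℝ × ℝ), IsCoupling π m μ ∧ c = ∫ p, |p.1 - p.2| ∂π}

/-- Membership in `P₁(ℝ)`: Borel probability measures on `ℝ` with finite first moment. -/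
def MemP1 (m : Measure ℝ) : Prop :=
  IsProbabilityMeasure m ∧ Integrable (fun x => |x|) m

/-- Membership in `P([-K,K])`: probability measures supported in `[-K,K]`. -/
def MemPK (K : ℝ) (m : Measure ℝ) : Prop :=
  IsProbabilityMeasure m ∧ m (Set.Icc (-K) K)ᶜ = 0

/-- The convex combination `(1-t)·m₀ + t·m` of two measures. -/
def lineSeg (m₀ m : Measure ℝ) (t : ℝ) : Measure ℝ :=
  ENNReal.ofReal (1 - t) • m₀ + ENNReal.ofReal t • m

/-- The integral of `f` against the signed difference `m - μ`:
`∫ f d(m - μ) = ∫ f dm - ∫ f dμ`. -/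
def dInt (f : ℝ → ℝ) (m μ : Measure ℝ) : ℝ := (∫ x, f x ∂m) - ∫ x, f x ∂μ

/-- `W₁`-(sequential) compactness of a subset of `P₁(ℝ)`. -/
def W1Compact (𝒦 : Set (Measure ℝ)) : Prop :=
  (∀ m ∈ 𝒦, MemP1 m) ∧
  ∀ u : ℕ → Measure ℝ, (∀ n, u n ∈ 𝒦) →
    ∃ m ∈ 𝒦, ∃ φ : ℕ → ℕ, StrictMono φ ∧
      Tendsto (fun n => W1 (u (φ n)) m) atTop (𝓝 0)

/-- Sublinearity in the real variable, uniformly over `W₁`-compact sets of measures. -/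
def SublinearOnCompacts (G : Measure ℝ → ℝ → ℝ) : Prop :=
  ∀ 𝒦 : Set (Measure ℝ), W1Compact 𝒦 →
    ∃ C > 0, ∀ m ∈ 𝒦, ∀ x : ℝ, |G m x| ≤ C * (1 + |x|)

/-- `W₁`-continuity of a function of the measure variable at a point of `P₁(ℝ)`. -/
def W1ContinuousAt (g : Measure ℝ → ℝ) (m : Measure ℝ) : Prop :=
  ∀ ε > 0, ∃ η > 0, ∀ μ, MemP1 μ → W1 μ m < η → |g μ - g m| < ε

/-- Joint continuity of `G : P₁(ℝ) × ℝ → ℝ`. -/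
def JointlyContinuous (G : Measure ℝ → ℝ → ℝ) : Prop :=
  ∀ m x, MemP1 m → ∀ ε > 0, ∃ η > 0, ∀ μ y, MemP1 μ →
    W1 μ m < η → |y - x| < η → |G μ y - G m x| < ε

/-- Joint continuity of `G : P₁(ℝ) × ℝ × ℝ → ℝ`. -/
def JointlyContinuous2 (G : Measure ℝ → ℝ → ℝ → ℝ) : Prop :=
  ∀ m x y, MemP1 m → ∀ ε > 0, ∃ η > 0, ∀ μ x' y', MemP1 μ →
    W1 μ m < η → |x' - x| < η → |y' - y| < η → |G μ x' y' - G m x y| < ε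

/-- `H` is a version of the (linear functional) derivative of `F : P₁(ℝ) → ℝ`. -/
def IsDerivVersion (F : Measure ℝ → ℝ) (H : Measure ℝ → ℝ → ℝ) : Prop :=
  Measurable (Function.uncurry H) ∧
  SublinearOnCompacts H ∧
  ∀ m m₀, MemP1 m → MemP1 m₀ →
    F m - F m₀ = ∫ t in (0:ℝ)..1, dInt (H (lineSeg m₀ m t)) m m₀

/-- `H` is the canonical derivative of `F : P₁(ℝ) → ℝ`: the version of the derivative
satisfying `∫ H(μ,x) dμ(x) = 0` for every `μ ∈ P₁(ℝ)`. -/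
def IsCanonicalDeriv (F : Measure ℝ → ℝ) (H : Measure ℝ → ℝ → ℝ) : Prop :=
  IsDerivVersion F H ∧ ∀ μ, MemP1 μ → ∫ x, H μ x ∂μ = 0

/-- `G : P₁(ℝ) × ℝ → ℝ` is of class `C^{0,1}`. -/
def IsC01 (G : Measure ℝ → ℝ → ℝ) : Prop :=
  (∀ m, MemP1 m → ContDiff ℝ 1 (G m)) ∧
  (∀ x : ℝ, ∀ m, MemP1 m → W1ContinuousAt (fun μ => G μ x) m) ∧
  SublinearOnCompacts G ∧
  JointlyContinuous (fun m x => deriv (G m) x)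

/-- `F : P₁(ℝ) → ℝ` is of class `C¹` with canonical derivative `H`. -/
def IsC1 (F : Measure ℝ → ℝ) (H : Measure ℝ → ℝ → ℝ) : Prop :=
  IsCanonicalDeriv F H ∧ IsC01 H

/-- Joint continuity on `P([-K,K]) × [-K,K]`. -/
def JointlyContinuousOnK (K : ℝ) (G : Measure ℝ → ℝ → ℝ) : Prop :=
  ∀ m x, MemPK K m → x ∈ Set.Icc (-K) K → ∀ ε > 0, ∃ η > 0,
    ∀ μ y, MemPK K μ → y ∈ Set.Icc (-K) K → W1 μ m < η → |y - x| < η →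
      |G μ y - G m x| < ε

/-- Joint continuity on `P([-K,K]) × [-K,K]²`. -/
def JointlyContinuousOnK2 (K : ℝ) (G : Measure ℝ → ℝ → ℝ → ℝ) : Prop :=
  ∀ m x y, MemPK K m → x ∈ Set.Icc (-K) K → y ∈ Set.Icc (-K) K → ∀ ε > 0, ∃ η > 0,
    ∀ μ x' y', MemPK K μ → x' ∈ Set.Icc (-K) K → y' ∈ Set.Icc (-K) K →
      W1 μ m < η → |x' - x| < η → |y' - y| < η → |G μ x' y' - G m x y| < ε

end

/-- The set `D_n^K` of probability measures that are convex combinations of the Dirac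
masses `δ_{k/n}`, `-nK ≤ k ≤ nK`. -/
def DnK (n K : ℕ) : Set (Measure ℝ) :=
  {m | ∃ l : ℤ → ℝ, (∀ k, 0 ≤ l k) ∧
    (∑ k ∈ Finset.Icc (-(n * K : ℤ)) (n * K : ℤ), l k = 1) ∧
    m = ∑ k ∈ Finset.Icc (-(n * K : ℤ)) (n * K : ℤ),
      ENNReal.ofReal (l k) • Measure.dirac ((k : ℝ) / n)}

/-!
The difference quotients towards a fixed Dirac mass are continuous in the measure and converge
uniformly, so their limit `ΔF(·, x)` is continuous and the quotients still converge when the base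
measure moves. Moving towards a convex combination of Dirac masses amounts to moving towards each of
them in turn, hence the derivative of `F` at `m` towards `ν` is `∫ ΔF(m, x) dν(x)`. Along the
segment `c_t = (1 - t) μ + t m` the derivative at `c_t` towards `c_t` itself vanishes, which turns
the right derivative `(1 - t)⁻¹ ∫ ΔF(c_t, x) dm(x)` of `t ↦ F(c_t)` into
`∫ ΔF(c_t, x) d(m - μ)(x)`, and the fundamental theorem of calculus concludes.
-/

section SlopeToward

variable {E F : Type*} [AddCommGroup E] [Module ℝ E] [NormedAddCommGroup F] [NormedSpace ℝ F]
  {Φ : E → F} {S : Set E} {a b c v w : E} {s t ε ρ : ℝ}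

/-- The difference quotient of `Φ` at `l` when a fraction `ε` of the way from `l` to `v` is
covered; for `Φ` a function of probability measures and `v` a Dirac mass it is the quotient in
Dawson's derivative. -/
noncomputable def slopeToward (Φ : E → F) (v : E) (ε : ℝ) (l : E) : F :=
  ε⁻¹ • (Φ (AffineMap.lineMap l v ε) - Φ l)

theorem slopeToward_self (Φ : E → F) (v : E) (ε : ℝ) : slopeToward Φ v ε v = 0 := by
  simp only [slopeToward, AffineMap.lineMap_same_apply, sub_self, smul_zero]

theorem lineMap_lineMap_eq_lineMap_add_smul (l : E) (hst : s + t = 1)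
    (hρ : (1 - ε * t) * ρ = s) :
    AffineMap.lineMap (AffineMap.lineMap l v (ε * ρ)) w (ε * t) =
      AffineMap.lineMap l (s • v + t • w) ε := by
  simp only [AffineMap.lineMap_apply_module]
  linear_combination (norm := module) (ε * hρ) • (v - l) - hst • ε • l

theorem slopeToward_add_smul (l : E) (hst : s + t = 1) (hρ : (1 - ε * t) * ρ = s)
    (hρ₀ : ρ ≠ 0) (ht : t ≠ 0) :
    slopeToward Φ (s • v + t • w) ε l =
      ρ • slopeToward Φ v (ε * ρ) l +
        t • slopeToward Φ w (ε * t) (AffineMap.lineMap l v (ε * ρ)) := by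
  have hv : ρ * (ε * ρ)⁻¹ = ε⁻¹ := by field_simp
  have hw : t * (ε * t)⁻¹ = ε⁻¹ := by field_simp
  simp only [slopeToward, lineMap_lineMap_eq_lineMap_add_smul l hst hρ, smul_smul, hv, hw]
  module

variable [TopologicalSpace E]

/-- `G` is the strict one-sided derivative of `Φ`, as a function on `S`, at `c` towards `v`. As for
`HasStrictDerivAt`, the base point of the difference quotient may vary near `c`. -/
def HasStrictDerivToward (Φ : E → F) (S : Set E) (c v : E) (G : F) : Prop :=
  Tendsto (fun p : ℝ × E => slopeToward Φ v p.1 p.2) (𝓝[>] 0 ×ˢ 𝓝[S] c) (𝓝 G)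

theorem hasStrictDerivToward_of_tendstoUniformlyOn {G : E → F}
    (hG : TendstoUniformlyOn (slopeToward Φ v) G (𝓝[>] 0) S)
    (hGc : ContinuousWithinAt G S c) : HasStrictDerivToward Φ S c v (G c) :=
  TendstoUniformlyOn.tendsto_comp (fun u hu => tendsto_fst.eventually (hG u hu)) hGc tendsto_snd

theorem HasStrictDerivToward.eq_zero {G : F} (hc : c ∈ S) (h : HasStrictDerivToward Φ S c c G) :
    G = 0 := by
  have hdiag : Tendsto (fun ε : ℝ => (ε, c)) (𝓝[>] 0) (𝓝[>] 0 ×ˢ 𝓝[S] c) :=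
    tendsto_id.prodMk (tendsto_const_pure.mono_right (pure_le_nhdsWithin hc))
  refine tendsto_nhds_unique (h.comp hdiag) ?_
  simp [Function.comp_def, slopeToward_self]

theorem tendsto_mul_nhdsGT_zero {f : ℝ → ℝ} (hs : 0 < s) (hf : Tendsto f (𝓝[>] 0) (𝓝 s)) :
    Tendsto (fun ε => ε * f ε) (𝓝[>] 0) (𝓝[>] 0) := by
  refine tendsto_nhdsWithin_iff.2 ⟨?_, ?_⟩
  · simpa using (tendsto_id.mono_left nhdsWithin_le_nhds).mul hf
  · filter_upwards [self_mem_nhdsWithin, hf.eventually_const_lt hs] with ε hε hfε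
    exact mul_pos hε hfε

theorem HasStrictDerivToward.hasDerivWithinAt_lineMap {A : F} (hc : AffineMap.lineMap b a t ∈ S)
    (ht : t < 1) (hA : HasStrictDerivToward Φ S (AffineMap.lineMap b a t) a A) :
    HasDerivWithinAt (fun r => Φ (AffineMap.lineMap b a r)) ((1 - t)⁻¹ • A) (Set.Ioi t) t := by
  have ht' : 0 < 1 - t := sub_pos.2 ht
  have hstep : Tendsto (fun r => (r - t) / (1 - t)) (𝓝[>] t) (𝓝[>] 0) := by
    refine tendsto_nhdsWithin_iff.2 ⟨?_, ?_⟩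
    · refine (Continuous.tendsto' ?_ t 0 (by simp)).mono_left nhdsWithin_le_nhds
      fun_prop
    · filter_upwards [self_mem_nhdsWithin] with r hr using div_pos (sub_pos.2 hr) ht'
  have hbase : Tendsto (fun _ : ℝ => AffineMap.lineMap b a t) (𝓝[>] t)
      (𝓝[S] AffineMap.lineMap b a t) := tendsto_const_pure.mono_right (pure_le_nhdsWithin hc)
  have hpoint (r : ℝ) : AffineMap.lineMap (AffineMap.lineMap b a t) a ((r - t) / (1 - t)) =
      AffineMap.lineMap b a r := by
    rw [AffineMap.lineMap_lineMap_left]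
    congr 1
    field_simp
    ring
  rw [hasDerivWithinAt_iff_tendsto_slope' Set.self_notMem_Ioi]
  refine ((hA.comp (hstep.prodMk hbase)).const_smul (1 - t)⁻¹).congr fun r => ?_
  have hscale : (1 - t)⁻¹ * ((r - t) / (1 - t))⁻¹ = (r - t)⁻¹ := by field_simp
  simp only [Function.comp_apply, slopeToward, smul_smul, hscale, hpoint, slope_def_module]

variable [ContinuousAdd E] [ContinuousSMul ℝ E]

theorem continuous_lineMap_fixed_right (v : E) :
    Continuous fun p : ℝ × E => AffineMap.lineMap p.2 v p.1 := by
  simp only [AffineMap.lineMap_apply_module]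
  fun_prop

theorem tendsto_lineMap_nhdsWithin (hS : Convex ℝ S) (hv : v ∈ S) :
    Tendsto (fun p : ℝ × E => AffineMap.lineMap p.2 v p.1) (𝓝[>] 0 ×ˢ 𝓝[S] c) (𝓝[S] c) := by
  refine tendsto_nhdsWithin_iff.2 ⟨?_, ?_⟩
  · refine ((continuous_lineMap_fixed_right v).tendsto' (0, c) c (by simp)).mono_left ?_
    rw [nhds_prod_eq]
    exact Filter.prod_mono nhdsWithin_le_nhds nhdsWithin_le_nhds
  · filter_upwards [prod_mem_prod (Ioo_mem_nhdsGT one_pos) self_mem_nhdsWithin] with p hp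
    exact hS.lineMap_mem hp.2 hv (Set.Ioo_subset_Icc_self hp.1)

theorem continuousOn_of_tendstoUniformlyOn_slopeToward {G : E → F} (hS : Convex ℝ S)
    (hΦ : ContinuousOn Φ S) (hv : v ∈ S)
    (hG : TendstoUniformlyOn (slopeToward Φ v) G (𝓝[>] 0) S) : ContinuousOn G S := by
  refine hG.continuousOn (Eventually.frequently ?_)
  filter_upwards [Ioo_mem_nhdsGT one_pos] with ε hε
  have hmaps : Set.MapsTo (fun l => AffineMap.lineMap l v ε) S S := fun l hl =>
    hS.lineMap_mem hl hv (Set.Ioo_subset_Icc_self hε)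
  have hcont : Continuous fun l : E => AffineMap.lineMap l v ε :=
    (continuous_lineMap_fixed_right v).comp (.prodMk_right ε)
  exact ((hΦ.comp hcont.continuousOn hmaps).sub hΦ).const_smul _

/-- To move towards `s • v + t • w`, move first towards `v` and then towards `w`; strictness at `c`
absorbs the displacement of the base point caused by the first move. -/
theorem HasStrictDerivToward.add_smul {G H : F} (hS : Convex ℝ S) (hv : v ∈ S)
    (hG : HasStrictDerivToward Φ S c v G) (hH : HasStrictDerivToward Φ S c w H)
    (hs : 0 < s) (ht : 0 < t) (hst : s + t = 1) :
    HasStrictDerivToward Φ S c (s • v + t • w) (s • G + t • H) := by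
  let ρ : ℝ → ℝ := fun ε => s / (1 - ε * t)
  have hden : Tendsto (fun ε : ℝ => 1 - ε * t) (𝓝[>] 0) (𝓝 1) :=
    (Continuous.tendsto' (by fun_prop) 0 1 (by simp)).mono_left nhdsWithin_le_nhds
  have hρ : Tendsto ρ (𝓝[>] 0) (𝓝 s) := by
    have h := (tendsto_const_nhds (x := s)).div hden one_ne_zero
    rwa [div_one] at h
  have hfirst : Tendsto (fun p : ℝ × E => (p.1 * ρ p.1, p.2)) (𝓝[>] 0 ×ˢ 𝓝[S] c)
      (𝓝[>] 0 ×ˢ 𝓝[S] c) := (tendsto_mul_nhdsGT_zero hs hρ).prodMap tendsto_id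
  have hsecond : Tendsto (fun p : ℝ × E => (p.1 * t, AffineMap.lineMap p.2 v (p.1 * ρ p.1)))
      (𝓝[>] 0 ×ˢ 𝓝[S] c) (𝓝[>] 0 ×ˢ 𝓝[S] c) :=
    ((tendsto_mul_nhdsGT_zero ht tendsto_const_nhds).comp tendsto_fst).prodMk
      ((tendsto_lineMap_nhdsWithin hS hv).comp hfirst)
  refine (((hρ.comp tendsto_fst).smul (hG.comp hfirst)).add
    ((hH.comp hsecond).const_smul t)).congr' ?_
  filter_upwards [tendsto_fst.eventually (hden.eventually_ne one_ne_zero)] with p hp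
  exact (slopeToward_add_smul p.2 hst (mul_div_cancel₀ s hp) (div_ne_zero hs.ne' hp) ht.ne').symm

theorem convex_setOf_hasStrictDerivToward (hS : Convex ℝ S) (c : E) :
    Convex ℝ {p : E × F | p.1 ∈ S ∧ HasStrictDerivToward Φ S c p.1 p.2} :=
  convex_iff_forall_pos.2 fun _ hp _ hq _ _ hs ht hst =>
    ⟨hS hp.1 hq.1 hs.le ht.le hst, hp.2.add_smul hS hp.1 hq.2 hs ht hst⟩

theorem HasStrictDerivToward.sum_smul {ι : Type*} [Fintype ι] {x : ι → E} {g : ι → F} {l : ι → ℝ}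
    (hS : Convex ℝ S) (hx : ∀ k, x k ∈ S) (hg : ∀ k, HasStrictDerivToward Φ S c (x k) (g k))
    (hl : l ∈ stdSimplex ℝ ι) :
    HasStrictDerivToward Φ S c (∑ k, l k • x k) (∑ k, l k • g k) := by
  have h := (convex_setOf_hasStrictDerivToward hS c).sum_mem (t := Finset.univ) (w := l)
    (z := fun k => (x k, g k)) (fun k _ => hl.1 k) hl.2 (fun k _ => ⟨hx k, hg k⟩)
  simpa only [Prod.fst_sum, Prod.snd_sum, Prod.smul_fst, Prod.smul_snd] using h.2

theorem HasStrictDerivToward.hasDerivWithinAt_lineMap_sub {A B : F} (hS : Convex ℝ S)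
    (ha : a ∈ S) (hb : b ∈ S) (ht : t ∈ Set.Ioo 0 1)
    (hA : HasStrictDerivToward Φ S (AffineMap.lineMap b a t) a A)
    (hB : HasStrictDerivToward Φ S (AffineMap.lineMap b a t) b B) :
    HasDerivWithinAt (fun r => Φ (AffineMap.lineMap b a r)) (A - B) (Set.Ioi t) t := by
  have hc : AffineMap.lineMap b a t ∈ S := hS.lineMap_mem hb ha (Set.Ioo_subset_Icc_self ht)
  have hself : (1 - t) • B + t • A = 0 := by
    have h := hB.add_smul hS hb hA (sub_pos.2 ht.2) ht.1 (sub_add_cancel 1 t)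
    rw [← AffineMap.lineMap_apply_module] at h
    exact h.eq_zero hc
  refine (hA.hasDerivWithinAt_lineMap hc ht.2).congr_deriv ?_
  rw [inv_smul_eq_iff₀ (sub_pos.2 ht.2).ne']
  linear_combination (norm := module) hself

theorem sub_eq_integral_of_hasStrictDerivToward [CompleteSpace F] {A B : E → F} (hS : Convex ℝ S)
    (hΦ : ContinuousOn Φ S) (ha : a ∈ S) (hb : b ∈ S)
    (hAc : ContinuousOn A S) (hBc : ContinuousOn B S)
    (hA : ∀ c ∈ S, HasStrictDerivToward Φ S c a (A c))
    (hB : ∀ c ∈ S, HasStrictDerivToward Φ S c b (B c)) :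
    Φ a - Φ b = ∫ t in (0 : ℝ)..1,
      (A (AffineMap.lineMap b a t) - B (AffineMap.lineMap b a t)) := by
  have hmaps : Set.MapsTo (fun t : ℝ => AffineMap.lineMap b a t) (Set.Icc 0 1) S :=
    fun _ ht => hS.lineMap_mem hb ha ht
  have hcont : ContinuousOn (fun t : ℝ => AffineMap.lineMap b a t) (Set.Icc 0 1) := by
    simp only [AffineMap.lineMap_apply_module]
    fun_prop
  have hderiv : ∀ t ∈ Set.Ioo (0 : ℝ) 1, HasDerivWithinAt (fun r => Φ (AffineMap.lineMap b a r))
      (A (AffineMap.lineMap b a t) - B (AffineMap.lineMap b a t)) (Set.Ioi t) t := fun t ht =>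
    have hc := hmaps (Set.Ioo_subset_Icc_self ht)
    (hA _ hc).hasDerivWithinAt_lineMap_sub hS ha hb ht (hB _ hc)
  have hint : IntervalIntegrable (fun t => A (AffineMap.lineMap b a t) -
      B (AffineMap.lineMap b a t)) volume 0 1 :=
    ((hAc.comp hcont hmaps).sub (hBc.comp hcont hmaps)).intervalIntegrable_of_Icc zero_le_one
  simpa using (intervalIntegral.integral_eq_sub_of_hasDeriv_right_of_le zero_le_one
    (hΦ.comp hcont hmaps) hderiv hint).symm

theorem sub_eq_integral_of_tendstoUniformlyOn_slopeToward [CompleteSpace F] {ι : Type*} [Fintype ι]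
    {x : ι → E} {g : ι → E → F} {α β : ι → ℝ} (hS : Convex ℝ S) (hΦ : ContinuousOn Φ S)
    (hx : ∀ k, x k ∈ S) (hg : ∀ k, TendstoUniformlyOn (slopeToward Φ (x k)) (g k) (𝓝[>] 0) S)
    (hα : α ∈ stdSimplex ℝ ι) (hβ : β ∈ stdSimplex ℝ ι)
    (ha : ∑ k, α k • x k = a) (hb : ∑ k, β k • x k = b) :
    Φ a - Φ b = ∫ t in (0 : ℝ)..1, (∑ k, α k • g k (AffineMap.lineMap b a t) -
      ∑ k, β k • g k (AffineMap.lineMap b a t)) := by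
  have hgc k : ContinuousOn (g k) S :=
    continuousOn_of_tendstoUniformlyOn_slopeToward hS hΦ (hx k) (hg k)
  have hstrict c (hc : c ∈ S) k : HasStrictDerivToward Φ S c (x k) (g k c) :=
    hasStrictDerivToward_of_tendstoUniformlyOn (hg k) (hgc k c hc)
  have hsum_mem {l : ι → ℝ} (hl : l ∈ stdSimplex ℝ ι) : ∑ k, l k • x k ∈ S :=
    hS.sum_mem (fun k _ => hl.1 k) hl.2 fun k _ => hx k
  have hsum_cont (l : ι → ℝ) : ContinuousOn (fun c => ∑ k, l k • g k c) S :=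
    continuousOn_finsetSum _ fun k _ => (hgc k).const_smul (l k)
  subst ha hb
  exact sub_eq_integral_of_hasStrictDerivToward hS hΦ (hsum_mem hα) (hsum_mem hβ)
    (hsum_cont α) (hsum_cont β) (fun c hc => .sum_smul hS hx (hstrict c hc) hα)
    (fun c hc => .sum_smul hS hx (hstrict c hc) hβ)

end SlopeToward

section Wasserstein

variable {ρ σ τ m μ : Measure ℝ} {π π' : Measure (ℝ × ℝ)} {R : ℝ}

theorem W1_nonneg (m μ : Measure ℝ) : 0 ≤ W1 m μ := by
  refine Real.sInf_nonneg ?_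
  rintro c ⟨π, -, rfl⟩
  exact integral_nonneg fun p => abs_nonneg _

theorem W1_le_of_isCoupling (h : IsCoupling π m μ) : W1 m μ ≤ ∫ p, |p.1 - p.2| ∂π := by
  refine csInf_le ⟨0, ?_⟩ ⟨π, h, rfl⟩
  rintro c ⟨π, -, rfl⟩
  exact integral_nonneg fun p => abs_nonneg _

theorem isCoupling_map_diag (ρ : Measure ℝ) : IsCoupling (ρ.map fun y => (y, y)) ρ ρ := by
  have hdiag : Measurable fun y : ℝ => (y, y) := by fun_prop
  constructor
  · simp [Measure.map_map measurable_fst hdiag, Function.comp_def]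
  · simp [Measure.map_map measurable_snd hdiag, Function.comp_def]

theorem isCoupling_inv_smul_prod [IsFiniteMeasure σ] [IsFiniteMeasure τ]
    (h : σ Set.univ = τ Set.univ) : IsCoupling ((σ Set.univ)⁻¹ • σ.prod τ) σ τ := by
  rcases eq_or_ne (σ Set.univ) 0 with hσ | hσ
  · obtain rfl := Measure.measure_univ_eq_zero.1 hσ
    obtain rfl := Measure.measure_univ_eq_zero.1 (h ▸ hσ)
    simp [IsCoupling]
  · have hcancel := ENNReal.inv_mul_cancel hσ (measure_ne_top σ _)
    constructor
    · rw [Measure.map_smul, Measure.map_fst_prod, ← h, smul_smul, hcancel, one_smul]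
    · rw [Measure.map_smul, Measure.map_snd_prod, smul_smul, hcancel, one_smul]

theorem IsCoupling.add {m' μ' : Measure ℝ} (h : IsCoupling π m μ) (h' : IsCoupling π' m' μ') :
    IsCoupling (π + π') (m + m') (μ + μ') :=
  ⟨by rw [Measure.map_add _ _ measurable_fst, h.1, h'.1],
    by rw [Measure.map_add _ _ measurable_snd, h.2, h'.2]⟩

theorem IsCoupling.measure_univ (h : IsCoupling π m μ) : π Set.univ = m Set.univ := by
  rw [← h.1, Measure.map_apply measurable_fst .univ, Set.preimage_univ]

theorem IsCoupling.ae_abs_sub_le (h : IsCoupling π m μ) (hm : ∀ᵐ y ∂m, |y| ≤ R)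
    (hμ : ∀ᵐ y ∂μ, |y| ≤ R) : ∀ᵐ p ∂π, |p.1 - p.2| ≤ 2 * R := by
  filter_upwards [ae_of_ae_map measurable_fst.aemeasurable (h.1 ▸ hm),
    ae_of_ae_map measurable_snd.aemeasurable (h.2 ▸ hμ)] with p h₁ h₂
  calc |p.1 - p.2| ≤ |p.1| + |p.2| := abs_sub _ _
    _ ≤ 2 * R := by linarith

/-- The common part `ρ` is left in place, and `σ` is coupled with `τ` by the normalized
product measure. -/
theorem W1_add_left_le [IsFiniteMeasure σ] [IsFiniteMeasure τ]
    (h : σ Set.univ = τ Set.univ) (hσ : ∀ᵐ y ∂σ, |y| ≤ R) (hτ : ∀ᵐ y ∂τ, |y| ≤ R) :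
    W1 (ρ + σ) (ρ + τ) ≤ 2 * R * σ.real Set.univ := by
  have hcoup := isCoupling_inv_smul_prod h
  set π := (σ Set.univ)⁻¹ • σ.prod τ
  have : IsFiniteMeasure π := ⟨hcoup.measure_univ ▸ measure_lt_top σ _⟩
  have hbound : ∀ᵐ p ∂π, ‖|p.1 - p.2|‖ ≤ 2 * R := by
    simpa only [Real.norm_eq_abs, abs_abs] using hcoup.ae_abs_sub_le hσ hτ
  have hdiag : (fun p : ℝ × ℝ => |p.1 - p.2|) =ᵐ[ρ.map fun y => (y, y)] 0 := by
    rw [EventuallyEq, ae_map_iff (by fun_prop) (measurableSet_eq_fun (by fun_prop) (by fun_prop))]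
    simp
  calc W1 (ρ + σ) (ρ + τ) ≤ ∫ p, |p.1 - p.2| ∂((ρ.map fun y => (y, y)) + π) :=
        W1_le_of_isCoupling ((isCoupling_map_diag ρ).add hcoup)
    _ = ∫ p, |p.1 - p.2| ∂π := by
        rw [integral_add_measure ((integrable_zero _ _ _).congr hdiag.symm)
          (.of_bound (by fun_prop) _ hbound), integral_congr_ae hdiag]
        simp
    _ ≤ 2 * R * π.real Set.univ :=
        (le_abs_self _).trans (norm_integral_le_of_norm_le_const hbound)
    _ = 2 * R * σ.real Set.univ := by rw [measureReal_def, hcoup.measure_univ, measureReal_def]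

end Wasserstein

section AtomicMeasure

variable {ι α : Type*} [Fintype ι] [MeasurableSpace α]

/-- The combination of the Dirac masses at the points `x k` with weights `l k`. Weights are real so
that convex combinations can be taken in `ι → ℝ`; `ENNReal.ofReal` truncates negative ones. -/
noncomputable def atomicMeasure (x : ι → α) (l : ι → ℝ) : Measure α :=
  ∑ k, ENNReal.ofReal (l k) • Measure.dirac (x k)

instance instIsFiniteMeasureAtomicMeasure (x : ι → α) (l : ι → ℝ) :
    IsFiniteMeasure (atomicMeasure x l) :=
  ⟨by simp [atomicMeasure, ENNReal.sum_lt_top]⟩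

theorem atomicMeasure_add (x : ι → α) {a b : ι → ℝ} (ha : 0 ≤ a) (hb : 0 ≤ b) :
    atomicMeasure x (a + b) = atomicMeasure x a + atomicMeasure x b := by
  simp only [atomicMeasure, ← Finset.sum_add_distrib, ← add_smul, Pi.add_apply,
    ENNReal.ofReal_add (ha _) (hb _)]

theorem atomicMeasure_smul (x : ι → α) {c : ℝ} (hc : 0 ≤ c) (l : ι → ℝ) :
    atomicMeasure x (c • l) = ENNReal.ofReal c • atomicMeasure x l := by
  simp only [atomicMeasure, Finset.smul_sum, smul_smul, Pi.smul_apply, smul_eq_mul,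
    ENNReal.ofReal_mul hc]

theorem atomicMeasure_single_one [DecidableEq ι] (x : ι → α) (k : ι) :
    atomicMeasure x (Pi.single k 1) = Measure.dirac (x k) := by
  rw [atomicMeasure, Finset.sum_eq_single k (fun j _ hj => by simp [hj]) (by simp)]
  simp

theorem atomicMeasure_univ (x : ι → α) {l : ι → ℝ} (hl : 0 ≤ l) :
    atomicMeasure x l Set.univ = ENNReal.ofReal (∑ k, l k) := by
  simp [atomicMeasure, ENNReal.ofReal_sum_of_nonneg fun k _ => hl k]

theorem ae_atomicMeasure {x : ι → α} {p : α → Prop} (hp : MeasurableSet {y | p y})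
    (h : ∀ k, p (x k)) (l : ι → ℝ) : ∀ᵐ y ∂atomicMeasure x l, p y := by
  rw [ae_iff]
  simp [atomicMeasure, Measure.dirac_apply' _ hp.compl, ← Set.compl_ofPred, h]

theorem integral_atomicMeasure [MeasurableSingletonClass α] (x : ι → α) {l : ι → ℝ} (hl : 0 ≤ l)
    (f : α → ℝ) : ∫ y, f y ∂atomicMeasure x l = ∑ k, l k • f (x k) := by
  rw [atomicMeasure, integral_finsetSum_measure fun k _ =>
    (integrable_dirac (by simp)).smul_measure ENNReal.ofReal_ne_top]
  refine Finset.sum_congr rfl fun k _ => ?_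
  rw [integral_smul_measure, integral_dirac, ENNReal.toReal_ofReal (hl k)]

theorem lineSeg_atomicMeasure (x : ι → ℝ) {a b : ι → ℝ} (ha : 0 ≤ a) (hb : 0 ≤ b) {t : ℝ}
    (ht : t ∈ Set.Icc 0 1) :
    lineSeg (atomicMeasure x b) (atomicMeasure x a) t =
      atomicMeasure x (AffineMap.lineMap b a t) := by
  have ht' : 0 ≤ 1 - t := sub_nonneg.2 ht.2
  rw [AffineMap.lineMap_apply_module, atomicMeasure_add x (smul_nonneg ht' hb)
    (smul_nonneg ht.1 ha), atomicMeasure_smul x ht', atomicMeasure_smul x ht.1, lineSeg]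

theorem W1_atomicMeasure_le {x : ι → ℝ} {R : ℝ} (hR : ∀ k, |x k| ≤ R) {a b : ι → ℝ} (ha : 0 ≤ a)
    (hb : 0 ≤ b) (hab : ∑ k, a k = ∑ k, b k) :
    W1 (atomicMeasure x a) (atomicMeasure x b) ≤ 2 * R * ∑ k, (a - b)⁺ k := by
  have hinf : 0 ≤ a ⊓ b := le_inf ha hb
  have hdecomp : a = a ⊓ b + (a - b)⁺ := by rw [inf_eq_sub_posPart_sub, sub_add_cancel]
  have hdecomp' : b = a ⊓ b + (b - a)⁺ := by
    rw [inf_comm, inf_eq_sub_posPart_sub, sub_add_cancel]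
  have hsum : ∑ k, (a - b)⁺ k = ∑ k, (b - a)⁺ k := by
    have hsum' : ∑ k, (a ⊓ b + (a - b)⁺) k = ∑ k, (a ⊓ b + (b - a)⁺) k := by
      rwa [← hdecomp, ← hdecomp']
    simpa only [Pi.add_apply, Finset.sum_add_distrib, add_right_inj] using hsum'
  have hbounded := ae_atomicMeasure (measurableSet_le measurable_abs measurable_const) hR
  have hmass : (atomicMeasure x (a - b)⁺).real Set.univ = ∑ k, (a - b)⁺ k := by
    rw [measureReal_def, atomicMeasure_univ x (posPart_nonneg _),
      ENNReal.toReal_ofReal (Finset.sum_nonneg fun k _ => posPart_nonneg (a - b) k)]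
  calc W1 (atomicMeasure x a) (atomicMeasure x b)
      = W1 (atomicMeasure x (a ⊓ b) + atomicMeasure x (a - b)⁺)
          (atomicMeasure x (a ⊓ b) + atomicMeasure x (b - a)⁺) := by
        rw [← atomicMeasure_add x hinf (posPart_nonneg _),
          ← atomicMeasure_add x hinf (posPart_nonneg _), ← hdecomp, ← hdecomp']
    _ ≤ 2 * R * (atomicMeasure x (a - b)⁺).real Set.univ := by
        refine W1_add_left_le ?_ (hbounded _) (hbounded _)
        rw [atomicMeasure_univ x (posPart_nonneg _), atomicMeasure_univ x (posPart_nonneg _), hsum]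
    _ = 2 * R * ∑ k, (a - b)⁺ k := by rw [hmass]

theorem tendsto_W1_atomicMeasure (x : ι → ℝ) {c : ι → ℝ} (hc : c ∈ stdSimplex ℝ ι) :
    Tendsto (fun l => W1 (atomicMeasure x l) (atomicMeasure x c)) (𝓝[stdSimplex ℝ ι] c)
      (𝓝 0) := by
  have hR k : |x k| ≤ ∑ j, |x j| :=
    Finset.single_le_sum (f := fun j => |x j|) (fun j _ => abs_nonneg _) (Finset.mem_univ k)
  have hupper : Tendsto (fun l => 2 * (∑ j, |x j|) * ∑ k, (l - c)⁺ k) (𝓝[stdSimplex ℝ ι] c)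
      (𝓝 0) := by
    refine (Continuous.tendsto' ?_ c 0 (by simp)).mono_left nhdsWithin_le_nhds
    simp only [Pi.posPart_apply, posPart_def]
    fun_prop
  refine squeeze_zero' (Eventually.of_forall fun l => W1_nonneg _ _) ?_ hupper
  filter_upwards [self_mem_nhdsWithin] with l hl
  exact W1_atomicMeasure_le hR hl.1 hc.1 (hl.2.trans hc.2.symm)

/-- The convex hull of the Dirac masses at the points `x k`. -/
def atomicMeasures (x : ι → α) : Set (Measure α) := atomicMeasure x '' stdSimplex ℝ ι

theorem mem_atomicMeasures_coe_finset {κ : Type*} (s : Finset κ) (x : κ → α) {m : Measure α} :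
    m ∈ atomicMeasures (fun k : s => x k) ↔ ∃ l : κ → ℝ, (∀ k, 0 ≤ l k) ∧ ∑ k ∈ s, l k = 1 ∧
      m = ∑ k ∈ s, ENNReal.ofReal (l k) • Measure.dirac (x k) := by
  constructor
  · rintro ⟨l, hl, rfl⟩
    have hext (k : s) : Function.extend Subtype.val l 0 (k : κ) = l k :=
      Subtype.val_injective.extend_apply l 0 k
    have hnonneg : 0 ≤ Function.extend Subtype.val l (0 : κ → ℝ) :=
      Function.extend_nonneg hl.1 le_rfl
    refine ⟨Function.extend Subtype.val l 0, hnonneg, ?_, ?_⟩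
    · simp only [← Finset.sum_coe_sort s, hext, hl.2]
    · simp only [← Finset.sum_coe_sort s, hext, atomicMeasure]
  · rintro ⟨l, hl, hsum, rfl⟩
    exact ⟨fun k => l k, ⟨fun k => hl k, (Finset.sum_coe_sort s l).trans hsum⟩,
      Finset.sum_coe_sort s fun k => ENNReal.ofReal (l k) • Measure.dirac (x k)⟩

/-- Continuity of `F` on `S` for the distance `W1`; measures are not a metric space under `W1`,
so it is spelled out. -/
def W1ContinuousOn (F : Measure ℝ → ℝ) (S : Set (Measure ℝ)) : Prop :=
  ∀ m ∈ S, ∀ ε > (0 : ℝ), ∃ η > (0 : ℝ), ∀ μ ∈ S, W1 μ m < η → |F μ - F m| < ε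

/-- `ΔF` is the Dawson derivative of `F`, i.e. the derivative towards the Dirac masses, uniformly
in the measure `m ∈ S` and in the position `x ∈ X` of the Dirac mass. -/
def IsUniformDawsonDerivOn (F : Measure ℝ → ℝ) (ΔF : Measure ℝ → ℝ → ℝ) (S : Set (Measure ℝ))
    (X : Set ℝ) : Prop :=
  ∀ δ > (0 : ℝ), ∃ η > (0 : ℝ), ∀ ε : ℝ, 0 < ε → ε < η → ∀ m ∈ S, ∀ x ∈ X,
    |(F (lineSeg m (Measure.dirac x) ε) - F m) / ε - ΔF m x| ≤ δ

theorem W1ContinuousOn.of_lipschitz {F : Measure ℝ → ℝ} {S : Set (Measure ℝ)} {L : ℝ}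
    (hF : ∀ m ∈ S, ∀ μ ∈ S, |F m - F μ| ≤ L * W1 m μ) : W1ContinuousOn F S := by
  intro m hm ε hε
  have hL : 0 < |L| + 1 := by positivity
  refine ⟨ε / (|L| + 1), div_pos hε hL, fun μ hμ hW => ?_⟩
  calc |F μ - F m| ≤ L * W1 μ m := hF μ hμ m hm
    _ ≤ (|L| + 1) * W1 μ m :=
        mul_le_mul_of_nonneg_right ((le_abs_self L).trans (lt_add_one _).le) (W1_nonneg μ m)
    _ < ε := (lt_div_iff₀' hL).1 hW

theorem W1ContinuousOn.continuousOn_atomicMeasure {F : Measure ℝ → ℝ} {x : ι → ℝ}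
    (hF : W1ContinuousOn F (atomicMeasures x)) :
    ContinuousOn (fun l => F (atomicMeasure x l)) (stdSimplex ℝ ι) := by
  intro c hc
  refine Metric.tendsto_nhds.2 fun ε hε => ?_
  obtain ⟨η, hη, hFη⟩ := hF _ ⟨c, hc, rfl⟩ ε hε
  filter_upwards [self_mem_nhdsWithin, (tendsto_W1_atomicMeasure x hc).eventually_lt_const hη]
    with l hl hW using hFη _ ⟨l, hl, rfl⟩ hW

theorem IsUniformDawsonDerivOn.mono_right {F : Measure ℝ → ℝ} {ΔF : Measure ℝ → ℝ → ℝ}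
    {S : Set (Measure ℝ)} {X Y : Set ℝ} (h : IsUniformDawsonDerivOn F ΔF S Y) (hXY : X ⊆ Y) :
    IsUniformDawsonDerivOn F ΔF S X := fun δ hδ =>
  let ⟨η, hη, H⟩ := h δ hδ
  ⟨η, hη, fun ε hε hεη m hm x hx => H ε hε hεη m hm x (hXY hx)⟩

theorem IsUniformDawsonDerivOn.tendstoUniformlyOn_slopeToward [DecidableEq ι] {F : Measure ℝ → ℝ}
    {ΔF : Measure ℝ → ℝ → ℝ} {x : ι → ℝ}
    (h : IsUniformDawsonDerivOn F ΔF (atomicMeasures x) (Set.range x)) (k : ι) :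
    TendstoUniformlyOn (slopeToward (fun l => F (atomicMeasure x l)) (Pi.single k 1))
      (fun l => ΔF (atomicMeasure x l) (x k)) (𝓝[>] 0) (stdSimplex ℝ ι) := by
  refine Metric.tendstoUniformlyOn_iff.2 fun δ hδ => ?_
  obtain ⟨η, hη, hquot⟩ := h (δ / 2) (half_pos hδ)
  filter_upwards [Ioo_mem_nhdsGT hη, Ioo_mem_nhdsGT one_pos] with ε hε hε₁ l hl
  have hmove : lineSeg (atomicMeasure x l) (Measure.dirac (x k)) ε =
      atomicMeasure x (AffineMap.lineMap l (Pi.single k 1) ε) := by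
    rw [← atomicMeasure_single_one, lineSeg_atomicMeasure x (single_mem_stdSimplex ℝ k).1 hl.1
      (Set.Ioo_subset_Icc_self hε₁)]
  have hle := hquot ε hε.1 hε.2 _ ⟨l, hl, rfl⟩ _ ⟨k, rfl⟩
  rw [hmove, div_eq_inv_mul] at hle
  rw [dist_comm, Real.dist_eq]
  exact hle.trans_lt (half_lt_self hδ)

theorem stmt7_general (x : ι → ℝ) (F : Measure ℝ → ℝ) (ΔF : Measure ℝ → ℝ → ℝ)
    (hF : W1ContinuousOn F (atomicMeasures x))
    (hΔF : IsUniformDawsonDerivOn F ΔF (atomicMeasures x) (Set.range x)) :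
    ∀ m ∈ atomicMeasures x, ∀ μ ∈ atomicMeasures x,
      F m - F μ = ∫ t in (0 : ℝ)..1, dInt (ΔF (lineSeg μ m t)) m μ := by
  classical
  rintro _ ⟨a, ha, rfl⟩ _ ⟨b, hb, rfl⟩
  have hsum (l : ι → ℝ) : ∑ k, l k • (Pi.single k 1 : ι → ℝ) = l := (pi_eq_sum_univ' l).symm
  refine (sub_eq_integral_of_tendstoUniformlyOn_slopeToward (convex_stdSimplex ℝ ι)
    hF.continuousOn_atomicMeasure (single_mem_stdSimplex ℝ) hΔF.tendstoUniformlyOn_slopeToward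
    ha hb (hsum a) (hsum b)).trans (intervalIntegral.integral_congr fun t ht => ?_)
  rw [Set.uIcc_of_le zero_le_one] at ht
  simp only [lineSeg_atomicMeasure x ha.1 hb.1 ht, dInt, integral_atomicMeasure x ha.1,
    integral_atomicMeasure x hb.1]

end AtomicMeasure

/-- The atoms `k / n`, `-nK ≤ k ≤ nK`, of the measures in `DnK n K`. -/
noncomputable def gridPoint (n K : ℕ) (k : Finset.Icc (-(n * K : ℤ)) (n * K : ℤ)) : ℝ :=
  (k : ℤ) / n

theorem gridPoint_mem_Icc (n K : ℕ) (k : Finset.Icc (-(n * K : ℤ)) (n * K : ℤ)) :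
    gridPoint n K k ∈ Set.Icc (-(K : ℝ)) K := by
  obtain ⟨hlow, hupp⟩ := Finset.mem_Icc.1 k.2
  have habs : |((k : ℤ) : ℝ)| ≤ K * n := by
    exact_mod_cast (abs_le.2 ⟨hlow, hupp⟩).trans_eq (mul_comm _ _)
  rw [Set.mem_Icc, ← abs_le, gridPoint, abs_div, Nat.abs_cast]
  exact div_le_of_le_mul₀ (Nat.cast_nonneg n) (Nat.cast_nonneg K) habs

theorem DnK_eq_atomicMeasures (n K : ℕ) : DnK n K = atomicMeasures (gridPoint n K) :=
  Set.ext fun _ => (mem_atomicMeasures_coe_finset _ fun k : ℤ => (k : ℝ) / n).symm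

/-- "differentiability" of `F` on the set of atomic measures `D_n^K`:
if `F` is Lipschitz and uniformly Dawson-differentiable on `D_n^K` with derivative `ΔF`
satisfying `∫ ΔF(m,·) dm = 0` and `C^{0,1}`-type regularity on `D_n^K`, then for all
`m, μ ∈ D_n^K`, `F(m) - F(μ) = ∫₀¹ ∫ ΔF((1-t)μ + t·m, x) d(m-μ)(x) dt`. -/
theorem stmt7 (n K : ℕ) (hn : 0 < n) (hK : 0 < K)
    (F : Measure ℝ → ℝ) (ΔF : Measure ℝ → ℝ → ℝ)
    (hLip : ∃ L : ℝ, ∀ m ∈ DnK n K, ∀ μ ∈ DnK n K, |F m - F μ| ≤ L * W1 m μ)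
    (hDawson : ∀ δ > (0:ℝ), ∃ η > (0:ℝ), ∀ ε : ℝ, 0 < ε → ε < η → ∀ m ∈ DnK n K,
      ∀ x ∈ Set.Icc (-(K : ℝ)) (K : ℝ),
        |(F (lineSeg m (Measure.dirac x) ε) - F m) / ε - ΔF m x| ≤ δ)
    (hzero : ∀ m ∈ DnK n K, ∫ x, ΔF m x ∂m = 0)
    (hC1x : ∀ m ∈ DnK n K, ContDiff ℝ 1 (ΔF m))
    (hContm : ∀ x : ℝ, ∀ m ∈ DnK n K, ∀ ε > (0:ℝ), ∃ η > (0:ℝ), ∀ μ ∈ DnK n K,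
      W1 μ m < η → |ΔF μ x - ΔF m x| < ε)
    (hJoint : ∀ m ∈ DnK n K, ∀ x : ℝ, ∀ ε > (0:ℝ), ∃ η > (0:ℝ),
      ∀ μ ∈ DnK n K, ∀ y : ℝ, W1 μ m < η → |y - x| < η →
        |deriv (ΔF μ) y - deriv (ΔF m) x| < ε) :
    ∀ m ∈ DnK n K, ∀ μ ∈ DnK n K,
      F m - F μ = ∫ t in (0:ℝ)..1, dInt (ΔF (lineSeg μ m t)) m μ := by
  obtain ⟨L, hL⟩ := hLip
  have hD : IsUniformDawsonDerivOn F ΔF (DnK n K) (Set.Icc (-(K : ℝ)) K) := hDawson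
  rw [DnK_eq_atomicMeasures] at hL hD ⊢
  exact stmt7_general _ F ΔF (.of_lipschitz hL)
    (hD.mono_right (Set.range_subset_iff.2 (gridPoint_mem_Icc n K)))
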